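/- Let n ≥ 2 and let q : (V^n, Σ) → (M^n, {p}) be a topological blowup of M at p such that V \ Σ is dense in V. If every homeomorphism of (M, {p}) is covered by a homeomorphism of (V, Σ) through q, then Σ is a single point and q is a homeomorphism. -/

import Mathlib

/-- A topological blowup of an `n`-manifold `M` at a point `p`: a quotient map
`q : V → M` from an `n`-manifold `V` such that `Σ = q⁻¹({p})` is nonempty, compact and
connected, and `q` restricts to a homeomorphism `V \ Σ → M \ {p}`. -/
structure TopBlowup (n : ℕ) (V M : Type*) [TopologicalSpace V] [TopologicalSpace M]
    [T2Space V] [T2Space M]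
    [ChartedSpace (EuclideanSpace ℝ (Fin n)) V]
    [ChartedSpace (EuclideanSpace ℝ (Fin n)) M] (p : M) where
  q : V → M
  quotientMap : Topology.IsQuotientMap q
  compact_fiber : IsCompact (q ⁻¹' {p})
  connected_fiber : IsConnected (q ⁻¹' {p})
  homeo_off : IsHomeomorph
    (Set.MapsTo.restrict q ((q ⁻¹' {p})ᶜ) ({p}ᶜ) (fun _ hv => hv))

/-!
Two points `a ≠ b` of the fibre over `p` are limits of points `v k`, `w k` off the fibre, whose
images in `M` both tend to `p`. In dimension at least two, spherical shells around `p` are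
connected, so after passing to a subsequence the pairs `q (v k)`, `q (w k)` can be enclosed in
pairwise disjoint connected open sets shrinking to `p`. Connected open sets are homogeneous, which
yields a homeomorphism of `M` that infinitely often fixes `q (v k)` and infinitely often moves it
to `q (w k)`. A continuous lift would have to send `a` both to `a` and to `b`.
-/

open Set Filter Topology Metric Function

section Support

variable {α : Type*}

theorem mapsTo_of_eqOn_id_compl {g : α → α} {s : Set α} (hg : g.Injective)
    (hs : EqOn g id sᶜ) : MapsTo g s s := by
  intro x hx
  by_contra hgx
  have hfix : g x = x := hg (hs hgx)
  exact hgx (hfix.symm ▸ hx)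

theorem eqOn_id_of_leftInverse {f g : α → α} {s : Set α} (hfg : LeftInverse f g)
    (hs : EqOn g id s) : EqOn f id s :=
  fun x hx => (congrArg f (hs hx)).symm.trans (hfg x)

end Support

section Gluing

variable {ι X : Type*} {U : ι → Set X}

open Classical in
/-- The map equal to `g i` on `U i` for every `i`, and to the identity off `⋃ i, U i`, for combining
homeomorphisms supported in disjoint sets. Where the `U i` overlap, one `g i` is chosen arbitrarily.
-/
noncomputable def glue (U : ι → Set X) (g : ι → X → X) (x : X) : X :=
  if h : ∃ i, x ∈ U i then g h.choose x else x

theorem glue_of_mem (hU : Pairwise (Disjoint on U)) (g : ι → X → X) {i : ι} {x : X}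
    (hx : x ∈ U i) : glue U g x = g i x := by
  have h : ∃ i, x ∈ U i := ⟨i, hx⟩
  rw [glue, dif_pos h, hU.eq (not_disjoint_iff.2 ⟨x, h.choose_spec, hx⟩)]

theorem glue_of_forall_notMem (g : ι → X → X) {x : X} (hx : ∀ i, x ∉ U i) : glue U g x = x :=
  dif_neg (not_exists.2 hx)

theorem leftInverse_glue (hU : Pairwise (Disjoint on U)) {f g : ι → X → X}
    (hg : ∀ i, MapsTo (g i) (U i) (U i)) (hfg : ∀ i, LeftInverse (f i) (g i)) :
    LeftInverse (glue U f) (glue U g) := by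
  intro x
  by_cases! hx : ∃ i, x ∈ U i
  · obtain ⟨i, hi⟩ := hx
    rw [glue_of_mem hU g hi, glue_of_mem hU f (hg i hi), hfg i x]
  · rw [glue_of_forall_notMem g hx, glue_of_forall_notMem f hx]

variable [TopologicalSpace X] [T2Space X] {p : X}

theorem exists_mem_nhds_eventually_subset (hp : Tendsto U cofinite (𝓝 p).smallSets)
    {x : X} {W : Set X} (hW : W ∈ 𝓝 x) :
    ∃ N ∈ 𝓝 x, ∀ᶠ i in cofinite, (N ∩ U i).Nonempty → U i ⊆ W := by
  rw [tendsto_smallSets_iff] at hp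
  rcases eq_or_ne x p with rfl | hxp
  · exact ⟨univ, univ_mem, (hp W hW).mono fun i hi _ => hi⟩
  · obtain ⟨N, N', hN, hN', hxN, hpN', hdisj⟩ := t2_separation hxp
    refine ⟨N, hN.mem_nhds hxN, (hp N' (hN'.mem_nhds hpN')).mono fun i hi hne => ?_⟩
    exact (not_disjoint_iff_nonempty_inter.2 hne (hdisj.mono_right hi)).elim

theorem continuous_glue (hd : Pairwise (Disjoint on U)) (hU : ∀ i, IsOpen (U i))
    (hp : Tendsto U cofinite (𝓝 p).smallSets) {g : ι → X → X} (hgc : ∀ i, Continuous (g i))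
    (hgU : ∀ i, MapsTo (g i) (U i) (U i)) (hg : ∀ i, EqOn (g i) id (U i)ᶜ) :
    Continuous (glue U g) := by
  refine continuous_iff_continuousAt.2 fun x => ?_
  by_cases! hx : ∃ i, x ∈ U i
  · obtain ⟨i, hi⟩ := hx
    refine (hgc i).continuousAt.congr ?_
    filter_upwards [(hU i).mem_nhds hi] with y hy using (glue_of_mem hd g hy).symm
  · rw [ContinuousAt, glue_of_forall_notMem g hx]
    intro W hW
    obtain ⟨N, hN, hNW⟩ := exists_mem_nhds_eventually_subset hp hW
    have hexc : ∀ᶠ y in 𝓝 x, ∀ i ∈ {i | ¬ ((N ∩ U i).Nonempty → U i ⊆ W)}, g i y ∈ W := by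
      refine (eventually_all_finite hNW).2 fun i _ => (hgc i).continuousAt ?_
      rwa [hg i (hx i)]
    rw [mem_map]
    filter_upwards [hN, hexc, hW] with y hyN hyexc hyW
    by_cases! hy : ∃ i, y ∈ U i
    · obtain ⟨i, hi⟩ := hy
      rw [mem_preimage, glue_of_mem hd g hi]
      by_cases hiW : (N ∩ U i).Nonempty → U i ⊆ W
      · exact hiW ⟨y, hyN, hi⟩ (hgU i hi)
      · exact hyexc i hiW
    · rwa [mem_preimage, glue_of_forall_notMem g hy]

theorem exists_homeomorph_glue (hd : Pairwise (Disjoint on U)) (hU : ∀ i, IsOpen (U i))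
    (hp : Tendsto U cofinite (𝓝 p).smallSets) (g : ι → X ≃ₜ X)
    (hg : ∀ i, EqOn (g i) id (U i)ᶜ) :
    ∃ h : X ≃ₜ X, (∀ i, EqOn h (g i) (U i)) ∧ EqOn h id (⋃ i, U i)ᶜ := by
  have hg' (i : ι) : EqOn (g i).symm id (U i)ᶜ :=
    eqOn_id_of_leftInverse (g i).symm_apply_apply (hg i)
  have hgU (i : ι) : MapsTo (g i) (U i) (U i) := mapsTo_of_eqOn_id_compl (g i).injective (hg i)
  have hgU' (i : ι) : MapsTo (g i).symm (U i) (U i) :=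
    mapsTo_of_eqOn_id_compl (g i).symm.injective (hg' i)
  refine ⟨{ toFun := glue U fun i => g i
            invFun := glue U fun i => (g i).symm
            left_inv := leftInverse_glue hd hgU fun i => (g i).symm_apply_apply
            right_inv := leftInverse_glue hd hgU' fun i => (g i).apply_symm_apply
            continuous_toFun := continuous_glue hd hU hp (fun i => (g i).continuous) hgU hg
            continuous_invFun :=
              continuous_glue hd hU hp (fun i => (g i).symm.continuous) hgU' hg' },
    fun i x hx => glue_of_mem hd (fun i => g i) hx,
    fun x hx => glue_of_forall_notMem (fun i => g i) (by simpa using hx)⟩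

end Gluing

section Extension

variable {X Y : Type*} [TopologicalSpace X] [TopologicalSpace Y] {e : OpenPartialHomeomorph X Y}
  {K : Set Y}

open Classical in
/-- The extension by the identity of the self-map of `e.source` that reads as `g` in the chart `e`,
for transporting compactly supported homeomorphisms of the model space to a manifold. -/
noncomputable def extendById (e : OpenPartialHomeomorph X Y) (g : Y → Y) : X → X :=
  e.source.piecewise (e.symm ∘ g ∘ e) id

theorem eqOn_extendById_source (e : OpenPartialHomeomorph X Y) (g : Y → Y) :
    EqOn (extendById e g) (e.symm ∘ g ∘ e) e.source := by
  classical exact piecewise_eqOn _ _ _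

theorem eqOn_extendById_id {g : Y → Y} (hg : EqOn g id Kᶜ) :
    EqOn (extendById e g) id (e.symm '' K)ᶜ := by
  intro x hx
  by_cases hxe : x ∈ e.source
  · have hex : e x ∉ K := fun h => hx ⟨e x, h, e.left_inv hxe⟩
    simp [eqOn_extendById_source e g hxe, hg hex, hxe]
  · classical exact piecewise_eq_of_notMem _ _ _ hxe

theorem leftInverse_extendById {f g : Y → Y} (hg : MapsTo g e.target e.target)
    (hfg : LeftInverse f g) :
    LeftInverse (extendById e f) (extendById e g) := by
  intro x
  by_cases hx : x ∈ e.source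
  · have hgx : g (e x) ∈ e.target := hg (e.map_source hx)
    simp [extendById, hx, hgx, hfg (e x)]
  · simp [extendById, hx]

theorem continuous_extendById [T2Space X] (hK : IsCompact K) (hKe : K ⊆ e.target) {g : Y → Y}
    (hgc : Continuous g) (hge : MapsTo g e.target e.target) (hg : EqOn g id Kᶜ) :
    Continuous (extendById e g) := by
  have hclosed : IsClosed (e.symm '' K) :=
    (hK.image_of_continuousOn (e.continuousOn_symm.mono hKe)).isClosed
  have hsource : ContinuousOn (extendById e g) e.source :=
    (e.continuousOn_symm.comp (hgc.comp_continuousOn e.continuousOn)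
      (hge.comp e.mapsTo)).congr (eqOn_extendById_source e g)
  have hcompl : ContinuousOn (extendById e g) (e.symm '' K)ᶜ :=
    continuousOn_id.congr (eqOn_extendById_id hg)
  have hcover : e.source ∪ (e.symm '' K)ᶜ = univ := by
    rw [← compl_subset_iff_union, compl_subset_compl]
    exact (e.symm.mapsTo.mono_left hKe).image_subset
  rw [← continuousOn_univ, ← hcover]
  exact hsource.union_of_isOpen hcompl e.open_source hclosed.isOpen_compl

theorem exists_homeomorph_extendById [T2Space X] (hK : IsCompact K) (hKe : K ⊆ e.target)
    (g : Y ≃ₜ Y) (hg : EqOn g id Kᶜ) :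
    ∃ h : X ≃ₜ X, EqOn h (e.symm ∘ g ∘ e) e.source ∧ EqOn h id (e.symm '' K)ᶜ := by
  have hg' : EqOn g.symm id Kᶜ := eqOn_id_of_leftInverse g.symm_apply_apply hg
  have hge : MapsTo g e.target e.target :=
    mapsTo_of_eqOn_id_compl g.injective (hg.mono (compl_subset_compl.2 hKe))
  have hge' : MapsTo g.symm e.target e.target :=
    mapsTo_of_eqOn_id_compl g.symm.injective (hg'.mono (compl_subset_compl.2 hKe))
  exact ⟨{ toFun := extendById e g
           invFun := extendById e g.symm
           left_inv := leftInverse_extendById hge g.symm_apply_apply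
           right_inv := leftInverse_extendById hge' g.apply_symm_apply
           continuous_toFun := continuous_extendById hK hKe g.continuous hge hg
           continuous_invFun := continuous_extendById hK hKe g.symm.continuous hge' hg' },
    eqOn_extendById_source e g, eqOn_extendById_id hg⟩

end Extension

section NormedSpace

variable {E : Type*} [NormedAddCommGroup E] [NormedSpace ℝ E]

theorem exists_homeomorph_add_of_lipschitzWith [CompleteSpace E] {c : NNReal} {u : E → E}
    (hu : LipschitzWith c u) (hc : c < 1) : ∃ g : E ≃ₜ E, ∀ z, g z = z + u z := by
  have happrox : ApproximatesLinearOn (fun z => z + u z)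
      (ContinuousLinearEquiv.refl ℝ E : E →L[ℝ] E) univ c := by
    refine LipschitzOnWith.approximatesLinearOn ?_
    convert hu.lipschitzOnWith using 1
    ext z
    simp
  have hsmall : Subsingleton E ∨
      c < ‖((ContinuousLinearEquiv.refl ℝ E).symm : E →L[ℝ] E)‖₊⁻¹ := by
    refine (subsingleton_or_nontrivial E).imp_right fun (_ : Nontrivial E) => ?_
    have hnorm : ‖((ContinuousLinearEquiv.refl ℝ E).symm : E →L[ℝ] E)‖₊ = 1 :=
      NNReal.eq ContinuousLinearMap.norm_id
    rwa [hnorm, inv_one]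
  exact ⟨happrox.toHomeomorph _ hsmall, fun _ => rfl⟩

theorem exists_homeomorph_of_mem_ball [CompleteSpace E] {x y : E} {ε : ℝ} (hy : y ∈ ball x ε) :
    ∃ g : E ≃ₜ E, g x = y ∧ EqOn g id (ball x ε)ᶜ := by
  have hε : 0 < ε := pos_of_mem_ball hy
  let φ : E → NNReal := thickenedIndicator hε {x}
  have hφ : LipschitzWith ε.toNNReal⁻¹ φ := lipschitzWith_thickenedIndicator hε {x}
  have hu : LipschitzWith (ε.toNNReal⁻¹ * ‖y - x‖₊) fun z => φ z • (y - x) := by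
    refine LipschitzWith.of_dist_le_mul fun a b => ?_
    rw [NNReal.smul_def, NNReal.smul_def, dist_eq_norm, ← sub_smul, norm_smul, ← dist_eq_norm,
      NNReal.coe_mul, coe_nnnorm, mul_right_comm]
    gcongr
    exact hφ.dist_le_mul a b
  have hc : ε.toNNReal⁻¹ * ‖y - x‖₊ < 1 := by
    rw [inv_mul_lt_one₀ (Real.toNNReal_pos.2 hε), ← NNReal.coe_lt_coe, Real.coe_toNNReal _ hε.le,
      coe_nnnorm, ← dist_eq_norm]
    exact hy
  obtain ⟨g, hg⟩ := exists_homeomorph_add_of_lipschitzWith hu hc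
  refine ⟨g, ?_, fun z hz => ?_⟩
  · have hφx : φ x = 1 := thickenedIndicator_one hε {x} rfl
    rw [hg, hφx, one_smul, add_sub_cancel]
  · have hφz : φ z = 0 := thickenedIndicator_zero hε {x} (by rwa [thickening_singleton])
    rw [hg, hφz, zero_smul, add_zero, id]

theorem isPreconnected_setOf_dist_mem (hE : 1 < Module.rank ℝ E) (c : E) {I : Set ℝ}
    (hI : IsPreconnected I) (hpos : I ⊆ Ioi 0) : IsPreconnected {z | dist z c ∈ I} := by
  have himage : (fun w : ℝ × E => c + w.1 • w.2) '' (I ×ˢ sphere 0 1) = {z | dist z c ∈ I} := by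
    ext z
    constructor
    · rintro ⟨⟨t, u⟩, ⟨ht, hu⟩, rfl⟩
      have hdist : dist (c + t • u) c = t := by
        rw [dist_self_add_left, norm_smul, mem_sphere_zero_iff_norm.1 hu, mul_one,
          Real.norm_of_nonneg (hpos ht).le]
      rwa [mem_ofPred_eq, hdist]
    · intro hz
      have hne : ‖z - c‖ ≠ 0 := dist_eq_norm z c ▸ (hpos hz).ne'
      refine ⟨(dist z c, (dist z c)⁻¹ • (z - c)), ⟨hz, ?_⟩, ?_⟩ <;>
        simp [dist_eq_norm, norm_smul, hne]
  rw [← himage]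
  exact (hI.prod (isPreconnected_sphere hE 0 1)).image _ (by fun_prop)

end NormedSpace

section Manifold

theorem firstCountableTopology_of_chartedSpace (H M : Type*) [TopologicalSpace H]
    [FirstCountableTopology H] [TopologicalSpace M] [ChartedSpace H M] :
    FirstCountableTopology M where
  nhds_generated_countable x := by
    rw [← (chartAt H x).symm_map_nhds_eq (mem_chart_source H x)]
    infer_instance

variable (E : Type*) [NormedAddCommGroup E] [NormedSpace ℝ E] {M : Type*} [TopologicalSpace M]
  [ChartedSpace E M]

theorem eventually_exists_homeomorph_eqOn_id [FiniteDimensional ℝ E] [T2Space M] {U : Set M}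
    {x : M} (hU : U ∈ 𝓝 x) :
    ∀ᶠ y in 𝓝 x, ∃ h : M ≃ₜ M, h x = y ∧ EqOn h id Uᶜ := by
  let e := chartAt E x
  have hx : x ∈ e.source := mem_chart_source E x
  have hUe : e.target ∩ e.symm ⁻¹' U ∈ 𝓝 (e x) :=
    inter_mem (e.open_target.mem_nhds (e.map_source hx))
      ((e.tendsto_symm hx) hU)
  obtain ⟨ε, hε, hball⟩ := nhds_basis_closedBall.mem_iff.1 hUe
  filter_upwards [e.open_source.mem_nhds hx,
    (e.continuousAt hx).preimage_mem_nhds (ball_mem_nhds _ hε)] with y hy hye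
  obtain ⟨g, hgx, hg⟩ := exists_homeomorph_of_mem_ball hye
  obtain ⟨h, hh, hid⟩ := exists_homeomorph_extendById (isCompact_closedBall (e x) ε)
    (hball.trans inter_subset_left) g (hg.mono (compl_subset_compl.2 ball_subset_closedBall))
  refine ⟨h, ?_, hid.mono (compl_subset_compl.2 ?_)⟩
  · rw [hh hx, comp_apply, comp_apply, hgx, e.left_inv hy]
  · exact image_subset_iff.2 (hball.trans inter_subset_right)

theorem exists_homeomorph_eqOn_id_of_isPreconnected [FiniteDimensional ℝ E] [T2Space M]
    {U : Set M} (hU : IsOpen U) (hconn : IsPreconnected U) {x y : M} (hx : x ∈ U) (hy : y ∈ U) :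
    ∃ h : M ≃ₜ M, h x = y ∧ EqOn h id Uᶜ := by
  refine hconn.induction₂ (fun x y => ∃ h : M ≃ₜ M, h x = y ∧ EqOn h id Uᶜ) ?_ ?_ ?_ hx hy
  · exact fun x hx =>
      (eventually_exists_homeomorph_eqOn_id E (hU.mem_nhds hx)).filter_mono nhdsWithin_le_nhds
  · rintro x y z - - - ⟨h, rfl, hid⟩ ⟨h', rfl, hid'⟩
    exact ⟨h.trans h', rfl, fun w hw => (congrArg h' (hid hw)).trans (hid' hw)⟩
  · rintro x y - - ⟨h, rfl, hid⟩
    exact ⟨h.symm, h.symm_apply_apply x, eqOn_id_of_leftInverse h.symm_apply_apply hid⟩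

variable {E}

theorem exists_isOpen_isPreconnected_subset_nhds (hE : 1 < Module.rank ℝ E) {p : M} {N : Set M}
    (hN : N ∈ 𝓝 p) : ∀ᶠ z : M × M in 𝓝[≠] p ×ˢ 𝓝[≠] p, ∃ U ⊆ N,
      IsOpen U ∧ IsPreconnected U ∧ Uᶜ ∈ 𝓝 p ∧ z.1 ∈ U ∧ z.2 ∈ U := by
  let e := chartAt E p
  have hp : p ∈ e.source := mem_chart_source E p
  have hNe : e.target ∩ e.symm ⁻¹' N ∈ 𝓝 (e p) :=
    inter_mem (e.open_target.mem_nhds (e.map_source hp)) ((e.tendsto_symm hp) hN)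
  obtain ⟨R, hR, hball⟩ := nhds_basis_ball.mem_iff.1 hNe
  have hnear : ∀ᶠ x in 𝓝[≠] p, x ∈ e.source ∧ 0 < dist (e x) (e p) ∧ dist (e x) (e p) < R := by
    filter_upwards [mem_nhdsWithin_of_mem_nhds (e.open_source.mem_nhds hp), self_mem_nhdsWithin,
      mem_nhdsWithin_of_mem_nhds ((e.continuousAt hp).preimage_mem_nhds (ball_mem_nhds _ hR))]
      with x hx hxp hxR
    exact ⟨hx, dist_pos.2 (e.injOn.ne hx hp hxp), hxR⟩
  filter_upwards [hnear.prod_mk hnear] with ⟨x, y⟩ ⟨⟨hx, hx0, hxR⟩, hy, hy0, hyR⟩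
  obtain ⟨r, hr0, hr⟩ := exists_between (lt_min hx0 hy0)
  let A : Set E := {z | dist z (e p) ∈ Ioo r R}
  have hAball : A ⊆ e.target ∩ e.symm ⁻¹' N := fun z hz => hball hz.2
  have hAopen : IsOpen A := isOpen_Ioo.preimage (by fun_prop)
  have hAconn : IsPreconnected A :=
    isPreconnected_setOf_dist_mem hE (e p) isPreconnected_Ioo fun t ht => hr0.trans ht.1
  have hA : e.symm '' A = e.source ∩ e ⁻¹' A :=
    e.symm_image_eq_source_inter_preimage (hAball.trans inter_subset_left)
  refine ⟨e.symm '' A, image_subset_iff.2 (hAball.trans inter_subset_right), ?_, ?_, ?_, ?_, ?_⟩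
  · exact e.symm.isOpen_image_of_subset_source hAopen (hAball.trans inter_subset_left)
  · exact hAconn.image _ (e.continuousOn_symm.mono (hAball.trans inter_subset_left))
  · filter_upwards [(e.continuousAt hp).preimage_mem_nhds (ball_mem_nhds _ hr0)] with z hz
    rw [hA]
    exact fun hzA => lt_asymm hz hzA.2.1
  · exact hA ▸ ⟨hx, hr.trans_le (min_le_left _ _), hxR⟩
  · exact hA ▸ ⟨hy, hr.trans_le (min_le_right _ _), hyR⟩

theorem exists_strictMono_disjoint_isPreconnected (hE : 1 < Module.rank ℝ E) {p : M} {x y : ℕ → M}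
    (hx : Tendsto x atTop (𝓝[≠] p)) (hy : Tendsto y atTop (𝓝[≠] p)) :
    ∃ (φ : ℕ → ℕ) (U : ℕ → Set M), StrictMono φ ∧ Pairwise (Disjoint on U) ∧
      Tendsto U atTop (𝓝 p).smallSets ∧ ∀ n, IsOpen (U n) ∧ IsPreconnected (U n) ∧ p ∉ U n ∧
        x (φ n) ∈ U n ∧ y (φ n) ∈ U n := by
  have : FirstCountableTopology M := firstCountableTopology_of_chartedSpace E M
  obtain ⟨W, hW⟩ := (𝓝 p).exists_antitone_basis
  obtain ⟨f, hf, hfr⟩ := exists_seq_of_forall_finset_exists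
    (fun u : ℕ × Set M => IsOpen u.2 ∧ IsPreconnected u.2 ∧ u.2ᶜ ∈ 𝓝 p ∧ x u.1 ∈ u.2 ∧ y u.1 ∈ u.2)
    (fun u u' => u.1 < u'.1 ∧ u'.2 ⊆ W u.1 ∩ u.2ᶜ) <| by
    intro s hs
    have hN : ⋂ u ∈ s, W u.1 ∩ u.2ᶜ ∈ 𝓝 p :=
      (biInter_finset_mem s).2 fun u hu => inter_mem (hW.mem u.1) (hs u hu).2.2.1
    have hlater : ∀ᶠ k in atTop, ∀ u ∈ s, u.1 < k :=
      (eventually_all_finset s).2 fun u _ => eventually_gt_atTop u.1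
    obtain ⟨k, ⟨U, hUN, hU⟩, hk⟩ := (((hx.prodMk hy).eventually
      (exists_isOpen_isPreconnected_subset_nhds hE hN)).and hlater).exists
    exact ⟨(k, U), hU, fun u hu => ⟨hk u hu, hUN.trans (biInter_subset_of_mem hu)⟩⟩
  have hφ : StrictMono fun n => (f n).1 := fun m n hmn => (hfr m n hmn).1
  refine ⟨fun n => (f n).1, fun n => (f n).2, hφ, ?_, ?_, fun n => ?_⟩
  · refine (pairwise_disjoint_on _).2 fun m n hmn => ?_
    exact (disjoint_compl_right.mono_right ((hfr m n hmn).2.trans inter_subset_right))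
  · refine tendsto_smallSets_iff.2 fun N hN => ?_
    obtain ⟨k, hk⟩ := hW.mem_iff.1 hN
    filter_upwards [eventually_gt_atTop k] with n hn
    exact ((hfr k n hn).2.trans inter_subset_left).trans ((hW.antitone (hφ.id_le k)).trans hk)
  · obtain ⟨hopen, hconn, hcompl, hmem⟩ := hf n
    exact ⟨hopen, hconn, mem_of_mem_nhds hcompl, hmem⟩

theorem exists_homeomorph_frequently_fixed_frequently_moved [FiniteDimensional ℝ E]
    (hE : 1 < Module.rank ℝ E) [T2Space M] {p : M} {x y : ℕ → M}
    (hx : Tendsto x atTop (𝓝[≠] p)) (hy : Tendsto y atTop (𝓝[≠] p)) :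
    ∃ h : M ≃ₜ M, h p = p ∧ (∃ᶠ k in atTop, h (x k) = x k) ∧ ∃ᶠ k in atTop, h (x k) = y k := by
  obtain ⟨φ, U, hφ, hd, hUp, hU⟩ := exists_strictMono_disjoint_isPreconnected hE hx hy
  choose hopen hconn hpU hxU hyU using hU
  have hmove (n : ℕ) : ∃ g : M ≃ₜ M,
      g (x (φ n)) = (if Even n then x (φ n) else y (φ n)) ∧ EqOn g id (U n)ᶜ := by
    refine exists_homeomorph_eqOn_id_of_isPreconnected E (hopen n) (hconn n) (hxU n) ?_
    split_ifs
    exacts [hxU n, hyU n]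
  choose g hgx hg using hmove
  obtain ⟨h, hh, hid⟩ := exists_homeomorph_glue hd hopen (Nat.cofinite_eq_atTop ▸ hUp) g hg
  have hhx (n : ℕ) : h (x (φ n)) = if Even n then x (φ n) else y (φ n) :=
    (hh n (hxU n)).trans (hgx n)
  refine ⟨h, hid (by simpa using hpU), hφ.tendsto_atTop.frequently ?_,
    hφ.tendsto_atTop.frequently ?_⟩
  · exact Nat.frequently_even.mono fun n hn => by rw [hhx, if_pos hn]
  · exact Nat.frequently_odd.mono fun n hn => by rw [hhx, if_neg (Nat.not_even_iff_odd.2 hn)]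

end Manifold

section Lifting

variable {E V M : Type*} [NormedAddCommGroup E] [NormedSpace ℝ E] [FiniteDimensional ℝ E]
  [TopologicalSpace V] [T2Space V] [FrechetUrysohnSpace V]
  [TopologicalSpace M] [T2Space M] [ChartedSpace E M] {p : M} {q : V → M}

theorem subsingleton_fiber_of_forall_exists_lift (hE : 1 < Module.rank ℝ E) (hq : Continuous q)
    (hinj : InjOn q (q ⁻¹' {p})ᶜ) (hdense : Dense (q ⁻¹' {p})ᶜ)
    (hlift : ∀ h : M ≃ₜ M, h p = p → ∃ L : V → V, Continuous L ∧ Semiconj q L h) :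
    (q ⁻¹' {p}).Subsingleton := by
  have happroach (c : V) (hc : q c = p) : ∃ v : ℕ → V, (∀ k, q (v k) ≠ p) ∧
      Tendsto v atTop (𝓝 c) ∧ Tendsto (q ∘ v) atTop (𝓝[≠] p) := by
    obtain ⟨v, hvp, hv⟩ := mem_closure_iff_seq_limit.1 (hdense c)
    exact ⟨v, hvp, hv, tendsto_nhdsWithin_iff.2
      ⟨hc ▸ (hq.tendsto c).comp hv, Eventually.of_forall hvp⟩⟩
  intro a ha b hb
  obtain ⟨v, hvp, hva, hqv⟩ := happroach a ha
  obtain ⟨w, hwp, hwb, hqw⟩ := happroach b hb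
  obtain ⟨h, hp, hfix, hmove⟩ := exists_homeomorph_frequently_fixed_frequently_moved hE hqv hqw
  obtain ⟨L, hL, hqL⟩ := hlift h hp
  have hLv {k : ℕ} {c : V} (hc : q c ≠ p) (hk : h (q (v k)) = q c) : L (v k) = c := by
    have hqLv : q (L (v k)) = q c := (hqL (v k)).trans hk
    exact hinj (fun hmem => hc (hqLv.symm.trans hmem)) hc hqLv
  have hLa : Tendsto (L ∘ v) atTop (𝓝 (L a)) := (hL.tendsto a).comp hva
  have hLaa : L a = a :=
    tendsto_nhds_unique_of_frequently_eq hLa hva (hfix.mono fun k => hLv (hvp k))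
  have hLab : L a = b :=
    tendsto_nhds_unique_of_frequently_eq hLa hwb (hmove.mono fun k => hLv (hwp k))
  exact hLaa.symm.trans hLab

theorem injective_of_subsingleton_fiber {α β : Type*} {f : α → β} {b : β}
    (hinj : InjOn f (f ⁻¹' {b})ᶜ) (hb : (f ⁻¹' {b}).Subsingleton) : f.Injective := by
  intro x y hxy
  by_cases hx : f x = b
  · exact hb hx (hxy.symm.trans hx)
  · exact hinj hx (fun hy => hx (hxy.trans hy)) hxy

theorem lifting_forces_trivial_blowup_general (hE : 1 < Module.rank ℝ E) (hq : IsQuotientMap q)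
    (hinj : InjOn q (q ⁻¹' {p})ᶜ) (hdense : Dense (q ⁻¹' {p})ᶜ)
    (hlift : ∀ h : M ≃ₜ M, h p = p → ∃ L : V → V, Continuous L ∧ Semiconj q L h) :
    (∃ v : V, q ⁻¹' {p} = {v}) ∧ IsHomeomorph q := by
  have hfiber : (q ⁻¹' {p}).Subsingleton :=
    subsingleton_fiber_of_forall_exists_lift hE hq.continuous hinj hdense hlift
  obtain ⟨v, hv⟩ := hq.surjective p
  exact ⟨⟨v, hfiber.eq_singleton_of_mem hv⟩,
    isHomeomorph_iff_isQuotientMap_injective.2 ⟨hq, injective_of_subsingleton_fiber hinj hfiber⟩⟩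

end Lifting

theorem TopBlowup.injOn {n : ℕ} {V M : Type*} [TopologicalSpace V] [TopologicalSpace M]
    [T2Space V] [T2Space M] [ChartedSpace (EuclideanSpace ℝ (Fin n)) V]
    [ChartedSpace (EuclideanSpace ℝ (Fin n)) M] {p : M} (B : TopBlowup n V M p) :
    InjOn B.q (B.q ⁻¹' {p})ᶜ :=
  (MapsTo.restrict_inj _).1 B.homeo_off.injective

theorem one_lt_rank_euclideanSpace {n : ℕ} (hn : 2 ≤ n) :
    1 < Module.rank ℝ (EuclideanSpace ℝ (Fin n)) := by
  rw [← Module.finrank_eq_rank, finrank_euclideanSpace_fin]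
  exact_mod_cast hn

/-- If `n ≥ 2` and `q : (V,Σ) → (M,{p})` is a topological blowup with
`V \ Σ` dense in `V`, and every homeomorphism of `(M,{p})` is covered through `q` by a
homeomorphism of `(V,Σ)`, then `Σ` is a single point and `q` is a homeomorphism. -/
theorem lifting_forces_trivial_blowup (n : ℕ) (hn : 2 ≤ n)
    (V M : Type*) [TopologicalSpace V] [TopologicalSpace M]
    [T2Space V] [T2Space M]
    [ChartedSpace (EuclideanSpace ℝ (Fin n)) V]
    [ChartedSpace (EuclideanSpace ℝ (Fin n)) M] (p : M)
    (B : TopBlowup n V M p)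
    (hdense : Dense ((B.q ⁻¹' {p})ᶜ))
    (hlift : ∀ h : M ≃ₜ M, h p = p →
      ∃ hLift : V ≃ₜ V, hLift '' (B.q ⁻¹' {p}) = B.q ⁻¹' {p} ∧
        B.q ∘ ⇑hLift = ⇑h ∘ B.q) :
    (∃ v : V, B.q ⁻¹' {p} = {v}) ∧ IsHomeomorph B.q := by
  have : FirstCountableTopology V :=
    firstCountableTopology_of_chartedSpace (EuclideanSpace ℝ (Fin n)) V
  refine lifting_forces_trivial_blowup_general (one_lt_rank_euclideanSpace hn) B.quotientMap
    B.injOn hdense fun h hp => ?_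
  obtain ⟨hLift, -, hcomm⟩ := hlift h hp
  exact ⟨hLift, hLift.continuous, congrFun hcomm⟩
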